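/- arXiv:1109.0716 — 2 statements merged into one kernel-verified Lean document; each statement's English description precedes it below -/
import Mathlib

section
/- Every nonconstant entire function f : ℂ → ℂ attains every complex value with at most one exception; that is, the complement of the range of f contains at most one point. -/
/-!
An entire function omitting `1` and `-1` has, `ℂ` being simply connected, the form
`cos (cos g * π)` with `g` entire. Then `cos (g z)` is never an integer. But the points at which
`cos` takes an integer value come within distance `4` of every point of the plane, so the range of
`g` contains no closed disc of radius `4`. By Bloch's theorem the range of a nonconstant entire
function contains arbitrarily large discs, so `g` is constant.
-/

open Complex Metric Set Filter
open scoped Topology Real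

theorem isSimplyConnected_of_convex {V : Type*} [AddCommGroup V] [Module ℝ V] [TopologicalSpace V]
    [ContinuousAdd V] [ContinuousSMul ℝ V] {s : Set V} (hs : Convex ℝ s) (hne : s.Nonempty) :
    IsSimplyConnected s :=
  have := hs.contractibleSpace hne
  SimplyConnectedSpace.ofContractible s

section Lifting

variable {E : Type*} [NormedAddCommGroup E] [NormedSpace ℂ E] {U : Set E} {f : E → ℂ}

theorem exists_differentiableOn_exp_eq (hUc : IsSimplyConnected U) (hUo : IsOpen U)
    (hf : DifferentiableOn ℂ f U) (hf₀ : ∀ z ∈ U, f z ≠ 0) :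
    ∃ g : E → ℂ, DifferentiableOn ℂ g U ∧ ∀ z ∈ U, exp (g z) = f z := by
  obtain ⟨g, hgc, hg⟩ := exists_continuousOn_eqOn_exp_comp hUc hUo hf.continuousOn
    (by rintro ⟨z, hz, hfz⟩; exact hf₀ z hz hfz)
  refine ⟨g, fun z hz ↦ ?_, hg⟩
  have hU : U ∈ 𝓝 z := hUo.mem_nhds hz
  have hexp : HasFDerivAt exp (.toSpanSingleton ℂ (exp (g z))) (g z) :=
    (hasDerivAt_exp (g z)).hasFDerivAt
  have hcomp : exp ∘ g =ᶠ[𝓝 z] f := hg.eventuallyEq_of_mem hU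
  exact (hexp.of_comp_of_leftInverse (hgc.continuousAt hU) (hf.differentiableAt hU).hasFDerivAt
    hcomp (f'symm := .toSpanSingleton ℂ (exp (g z))⁻¹)
    fun _ ↦ by simp).differentiableAt.differentiableWithinAt

theorem exists_differentiableOn_sq_eq (hUc : IsSimplyConnected U) (hUo : IsOpen U)
    (hf : DifferentiableOn ℂ f U) (hf₀ : ∀ z ∈ U, f z ≠ 0) :
    ∃ g : E → ℂ, DifferentiableOn ℂ g U ∧ ∀ z ∈ U, g z ^ 2 = f z := by
  obtain ⟨L, hL, hLf⟩ := exists_differentiableOn_exp_eq hUc hUo hf hf₀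
  refine ⟨fun z ↦ exp (L z / 2), by fun_prop, fun z hz ↦ ?_⟩
  rw [← exp_nat_mul, Nat.cast_ofNat, mul_div_cancel₀ _ two_ne_zero, hLf z hz]

-- `cos w = f` is equivalent to `exp (I * w) = f ± √(f ^ 2 - 1)`, and the two signs give
-- mutually inverse, hence nonvanishing, right-hand sides.
theorem exists_differentiableOn_cos_eq (hUc : IsSimplyConnected U) (hUo : IsOpen U)
    (hf : DifferentiableOn ℂ f U) (hf₁ : ∀ z ∈ U, f z ≠ 1) (hf₂ : ∀ z ∈ U, f z ≠ -1) :
    ∃ g : E → ℂ, DifferentiableOn ℂ g U ∧ ∀ z ∈ U, cos (g z) = f z := by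
  obtain ⟨s, hs, hsf⟩ := exists_differentiableOn_sq_eq hUc hUo (f := fun z ↦ f z ^ 2 - 1)
    (by fun_prop) fun z hz h ↦ (sq_eq_one_iff.mp (sub_eq_zero.mp h)).elim (hf₁ z hz) (hf₂ z hz)
  have hinv : ∀ z ∈ U, (f z + s z) * (f z - s z) = 1 := fun z hz ↦ by
    linear_combination -hsf z hz
  obtain ⟨L, hL, hLf⟩ := exists_differentiableOn_exp_eq hUc hUo (f := fun z ↦ f z + s z)
    (by fun_prop) fun z hz ↦ left_ne_zero_of_mul_eq_one (hinv z hz)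
  refine ⟨fun z ↦ -(L z * I), by fun_prop, fun z hz ↦ ?_⟩
  have hexp_neg : exp (-L z) = f z - s z := by
    rw [exp_neg, hLf z hz, inv_eq_of_mul_eq_one_right (hinv z hz)]
  rw [cos_neg, cos_mul_I, cosh, hLf z hz, hexp_neg]
  ring

theorem ne_int_of_cos_mul_pi_ne_one_of_ne_neg_one {w : ℂ} (h₁ : cos (w * π) ≠ 1)
    (h₂ : cos (w * π) ≠ -1) (n : ℤ) : w ≠ n := by
  rintro rfl
  have hsq : cos (n * π) ^ 2 = 1 := by rw [cos_sq', sin_int_mul_pi]; norm_num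
  exact (sq_eq_one_iff.mp hsq).elim h₁ h₂

theorem exists_differentiableOn_cos_cos_mul_pi_eq (hUc : IsSimplyConnected U) (hUo : IsOpen U)
    (hf : DifferentiableOn ℂ f U) (hf₁ : ∀ z ∈ U, f z ≠ 1) (hf₂ : ∀ z ∈ U, f z ≠ -1) :
    ∃ g : E → ℂ, DifferentiableOn ℂ g U ∧ ∀ z ∈ U, cos (cos (g z) * π) = f z := by
  obtain ⟨F, hF, hFf⟩ := exists_differentiableOn_cos_eq hUc hUo hf hf₁ hf₂
  have hpi : (π : ℂ) ≠ 0 := ofReal_ne_zero.mpr Real.pi_ne_zero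
  have hFf' : ∀ z ∈ U, cos (F z / π * π) = f z := fun z hz ↦ by
    rw [div_mul_cancel₀ _ hpi, hFf z hz]
  have hF_int : ∀ z ∈ U, ∀ n : ℤ, F z / π ≠ n := fun z hz ↦
    ne_int_of_cos_mul_pi_ne_one_of_ne_neg_one (hFf' z hz ▸ hf₁ z hz) (hFf' z hz ▸ hf₂ z hz)
  obtain ⟨g, hg, hgF⟩ := exists_differentiableOn_cos_eq hUc hUo (f := fun z ↦ F z / π)
    (by fun_prop) (fun z hz ↦ mod_cast hF_int z hz 1) (fun z hz ↦ mod_cast hF_int z hz (-1))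
  exact ⟨g, hg, fun z hz ↦ by rw [hgF z hz, hFf' z hz]⟩

end Lifting

section CosInt

theorem cosh_add_one_le_cosh_add_two {y : ℝ} (hy : 0 ≤ y) :
    Real.cosh y + 1 ≤ Real.cosh (y + 2) := by
  have hcosh_two : 2 ≤ Real.cosh 2 :=
    (Real.self_le_sinh_iff.mpr zero_le_two).trans (Real.sinh_lt_cosh 2).le
  calc Real.cosh y + 1 ≤ Real.cosh y * 2 := by linarith [Real.one_le_cosh y]
    _ ≤ Real.cosh y * Real.cosh 2 := by gcongr
    _ ≤ Real.cosh y * Real.cosh 2 + Real.sinh y * Real.sinh 2 :=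
      le_add_of_nonneg_right <| mul_nonneg (Real.sinh_nonneg_iff.2 hy)
        (Real.sinh_nonneg_iff.2 zero_le_two)
    _ = Real.cosh (y + 2) := (Real.cosh_add y 2).symm

theorem exists_abs_sub_le_two_cosh_eq_int (y : ℝ) :
    ∃ t : ℝ, |t - y| ≤ 2 ∧ ∃ n : ℤ, Real.cosh t = n := by
  wlog hy : 0 ≤ y generalizing y
  · obtain ⟨t, ht, n, hn⟩ := this (-y) (by linarith)
    refine ⟨-t, ?_, n, by rwa [Real.cosh_neg]⟩
    rwa [← abs_neg, neg_sub', neg_neg]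
  obtain ⟨t, ht, hcosh⟩ : (⌈Real.cosh y⌉ : ℝ) ∈ Real.cosh '' Icc y (y + 2) :=
    intermediate_value_Icc (by linarith) Real.continuous_cosh.continuousOn
      ⟨Int.le_ceil _, (Int.ceil_lt_add_one _).le.trans (cosh_add_one_le_cosh_add_two hy)⟩
  exact ⟨t, abs_le.mpr ⟨by linarith [ht.1], by linarith [ht.2]⟩, _, hcosh⟩

theorem exists_int_abs_mul_pi_sub_le_two (x : ℝ) : ∃ m : ℤ, |m * π - x| ≤ 2 := by
  refine ⟨round (x / π), ?_⟩
  calc |round (x / π) * π - x| = |x / π - round (x / π)| * π := by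
        rw [abs_sub_comm, ← abs_of_pos Real.pi_pos, ← abs_mul, abs_of_pos Real.pi_pos, sub_mul,
          div_mul_cancel₀ _ Real.pi_ne_zero]
    _ ≤ 1 / 2 * 4 := by
        gcongr
        exacts [abs_sub_round _, Real.pi_le_four]
    _ = 2 := by norm_num

theorem exists_mem_closedBall_cos_eq_int (w : ℂ) : ∃ v ∈ closedBall w 4, ∃ n : ℤ, cos v = n := by
  obtain ⟨t, ht, n, hn⟩ := exists_abs_sub_le_two_cosh_eq_int w.im
  obtain ⟨m, hm⟩ := exists_int_abs_mul_pi_sub_le_two w.re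
  refine ⟨t * I + m * π, ?_, (m.negOnePow : ℤ) * n, ?_⟩
  · rw [mem_closedBall, dist_eq_norm]
    have hre : (t * I + m * π - w).re = m * π - w.re := by simp
    have him : (t * I + m * π - w).im = t - w.im := by simp
    calc ‖t * I + m * π - w‖ ≤ |m * π - w.re| + |t - w.im| :=
          hre ▸ him ▸ norm_le_abs_re_add_abs_im _
      _ ≤ 4 := by linarith
  · rw [cos_antiperiodic.add_int_mul_eq, cos_mul_I, ← ofReal_cosh, hn, ofReal_intCast,
      Int.cast_mul]

end CosInt

section Bloch

theorem hofer_closedBall {X : Type*} [MetricSpace X] [CompleteSpace X] {φ : X → ℝ} {x : X} {ε : ℝ}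
    (hε : 0 < ε) (hφ : ContinuousOn φ (closedBall x (3 * ε)))
    (hφ₀ : ∀ y ∈ closedBall x (3 * ε), 0 ≤ φ y) :
    ∃ a, ∃ r > 0, closedBall a r ⊆ closedBall x (3 * ε) ∧ ε * φ x ≤ r * φ a ∧
      ∀ y ∈ closedBall a r, φ y ≤ 2 * φ a := by
  have := (isClosed_closedBall (x := x) (ε := 3 * ε)).completeSpace_coe
  obtain ⟨r, hr, ⟨a, _⟩, hrε, hax, hxa, hbound⟩ := hofer ⟨x, mem_closedBall_self (by positivity)⟩
    ε hε hφ.domRestrict fun y ↦ hφ₀ y y.2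
  replace hax : dist a x ≤ 2 * ε := hax
  have hsub : closedBall a r ⊆ closedBall x (3 * ε) := closedBall_subset_closedBall' (by linarith)
  refine ⟨a, r, hr, hsub, hxa, fun y hy ↦ hbound ⟨y, hsub hy⟩ ?_⟩
  rwa [Subtype.dist_eq, dist_comm]

theorem closedBall_subset_image_of_norm_deriv_sub_le {𝕜 : Type*} [RCLike 𝕜] {f f' : 𝕜 → 𝕜}
    {a c : 𝕜} {r K : ℝ} (hr : 0 ≤ r)
    (hf : ∀ z ∈ closedBall a r, HasDerivWithinAt f (f' z) (closedBall a r) z)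
    (hf' : ∀ z ∈ closedBall a r, ‖f' z - c‖ ≤ K) :
    closedBall (f a) ((‖c‖ - K) * r) ⊆ f '' closedBall a r := by
  have ha : a ∈ closedBall a r := mem_closedBall_self hr
  have hK : 0 ≤ K := (norm_nonneg _).trans (hf' a ha)
  obtain rfl | hc := eq_or_ne c 0
  · have hle : (‖(0 : 𝕜)‖ - K) * r ≤ 0 :=
      mul_nonpos_of_nonpos_of_nonneg (by simpa using hK) hr
    exact (closedBall_subset_closedBall hle).trans (by simpa using mem_image_of_mem f ha)
  let φ : 𝕜 →L[𝕜] 𝕜 := .toSpanSingleton 𝕜 c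
  let φinv : φ.NonlinearRightInverse :=
    { toFun y := y / c
      nnnorm := ‖c‖₊⁻¹
      bound' y := by simp [div_eq_inv_mul]
      right_inv' y := by simp [φ, hc] }
  lift K to NNReal using hK
  have hφ : ∀ z ∈ closedBall a r, ‖ContinuousLinearMap.toSpanSingleton 𝕜 (f' z) - φ‖ ≤ K := by
    intro z hz
    rw [show ContinuousLinearMap.toSpanSingleton 𝕜 (f' z) - φ = .toSpanSingleton 𝕜 (f' z - c) by
      ext; simp [φ], ContinuousLinearMap.norm_toSpanSingleton]
    exact hf' z hz
  have happrox : ApproximatesLinearOn f φ (closedBall a r) K := fun y hy x hx ↦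
    (convex_closedBall a r).norm_image_sub_le_of_norm_hasFDerivWithin_le'
      (fun z hz ↦ (hf z hz).hasFDerivWithinAt) hφ hx hy
  simpa [φinv, SurjOn] using
    happrox.surjOn_closedBall_of_nonlinearRightInverse φinv hr Subset.rfl

variable {f : ℂ → ℂ} {a : ℂ} {r M : ℝ}

theorem closedBall_subset_image_ball_of_norm_deriv_le (hr : 0 < r) (hM : 0 ≤ M)
    (hf : DifferentiableOn ℂ f (ball a r))
    (hbound : ∀ z ∈ ball a r, ‖deriv f z‖ ≤ M * ‖deriv f a‖) :
    closedBall (f a) (r * ‖deriv f a‖ / (4 * (M + 1))) ⊆ f '' ball a r := by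
  set D := ‖deriv f a‖
  -- The radius up to which the Schwarz lemma keeps `deriv f` within `D / 2` of `deriv f a`.
  set ρ := r / (2 * (M + 1)) with hρ
  have hρ_pos : 0 < ρ := by positivity
  have hρr : closedBall a ρ ⊆ ball a r :=
    closedBall_subset_ball (div_lt_self hr (by linarith))
  have hmaps : MapsTo (deriv f) (ball a r) (closedBall (deriv f a) ((M + 1) * D)) := by
    intro z hz
    rw [mem_closedBall, dist_eq_norm]
    calc ‖deriv f z - deriv f a‖ ≤ ‖deriv f z‖ + D := norm_sub_le _ _
      _ ≤ (M + 1) * D := by linarith [hbound z hz]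
  have hclose : ∀ z ∈ closedBall a ρ, ‖deriv f z - deriv f a‖ ≤ D / 2 := by
    intro z hz
    rw [← dist_eq_norm]
    calc dist (deriv f z) (deriv f a) ≤ (M + 1) * D / r * dist z a :=
          dist_le_div_mul_dist_of_mapsTo_ball (hf.deriv isOpen_ball) hmaps (hρr hz)
      _ ≤ (M + 1) * D / r * ρ := by gcongr; exact hz
      _ = D / 2 := by rw [hρ]; field_simp
  have hderiv : ∀ z ∈ closedBall a ρ, HasDerivWithinAt f (deriv f z) (closedBall a ρ) z :=
    fun z hz ↦ (hf.hasDerivAt (isOpen_ball.mem_nhds (hρr hz))).hasDerivWithinAt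
  have hradius : r * D / (4 * (M + 1)) = (D - D / 2) * ρ := by rw [hρ]; field_simp; norm_num
  rw [hradius]
  exact (closedBall_subset_image_of_norm_deriv_sub_le hρ_pos.le hderiv hclose).trans
    (image_mono hρr)

theorem exists_closedBall_subset_image_ball {z₀ : ℂ} {R : ℝ} (hR : 0 < R)
    (hf : DifferentiableOn ℂ f (ball z₀ R)) :
    ∃ a ∈ ball z₀ R, closedBall (f a) (R * ‖deriv f z₀‖ / 48) ⊆ f '' ball z₀ R := by
  have hsub : closedBall z₀ (3 * (R / 4)) ⊆ ball z₀ R := closedBall_subset_ball (by linarith)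
  obtain ⟨a, r, hr, har, hle, hbound⟩ := hofer_closedBall (φ := fun z ↦ ‖deriv f z‖)
    (show 0 < R / 4 by positivity) ((hf.deriv isOpen_ball).continuousOn.norm.mono hsub)
    fun _ _ ↦ norm_nonneg _
  have harR : ball a r ⊆ ball z₀ R := ball_subset_closedBall.trans (har.trans hsub)
  refine ⟨a, harR (mem_ball_self hr), ?_⟩
  calc closedBall (f a) (R * ‖deriv f z₀‖ / 48)
      ⊆ closedBall (f a) (r * ‖deriv f a‖ / (4 * (2 + 1))) :=
        closedBall_subset_closedBall (by linarith)
    _ ⊆ f '' ball a r := closedBall_subset_image_ball_of_norm_deriv_le hr zero_le_two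
        (hf.mono harR) fun z hz ↦ hbound z (ball_subset_closedBall hz)
    _ ⊆ f '' ball z₀ R := image_mono harR

theorem exists_closedBall_subset_range (hf : Differentiable ℂ f) {z₀ : ℂ} (hz₀ : deriv f z₀ ≠ 0)
    (hr : 0 < r) : ∃ a, closedBall (f a) r ⊆ range f := by
  have : 0 < ‖deriv f z₀‖ := norm_pos_iff.mpr hz₀
  obtain ⟨a, -, ha⟩ := exists_closedBall_subset_image_ball (z₀ := z₀)
    (R := 48 * r / ‖deriv f z₀‖) (by positivity) hf.differentiableOn
  have hradius : 48 * r / ‖deriv f z₀‖ * ‖deriv f z₀‖ / 48 = r := by field_simp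
  rw [hradius] at ha
  exact ⟨a, ha.trans (image_subset_range _ _)⟩

end Bloch

theorem exists_eq_const_of_forall_ne_one_of_forall_ne_neg_one {f : ℂ → ℂ} (hf : Differentiable ℂ f)
    (hf₁ : ∀ z, f z ≠ 1) (hf₂ : ∀ z, f z ≠ -1) : ∃ c, ∀ z, f z = c := by
  obtain ⟨g, hg, hgf⟩ := exists_differentiableOn_cos_cos_mul_pi_eq
    (isSimplyConnected_of_convex convex_univ univ_nonempty) isOpen_univ hf.differentiableOn
    (fun z _ ↦ hf₁ z) (fun z _ ↦ hf₂ z)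
  rw [differentiableOn_univ] at hg
  replace hgf : ∀ z, cos (cos (g z) * π) = f z := fun z ↦ hgf z (mem_univ z)
  have hg_int : ∀ z, ∀ n : ℤ, cos (g z) ≠ n := fun z ↦
    ne_int_of_cos_mul_pi_ne_one_of_ne_neg_one (hgf z ▸ hf₁ z) (hgf z ▸ hf₂ z)
  have hderiv : ∀ z, deriv g z = 0 := by
    by_contra! ⟨z, hz⟩
    obtain ⟨a, ha⟩ := exists_closedBall_subset_range hg hz four_pos
    obtain ⟨v, hv, n, hn⟩ := exists_mem_closedBall_cos_eq_int (g a)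
    obtain ⟨u, rfl⟩ := ha hv
    exact hg_int u n hn
  refine ⟨f 0, fun z ↦ ?_⟩
  rw [← hgf z, ← hgf 0, is_const_of_deriv_eq_zero hg hderiv z 0]

/-- **Picard's little theorem.** Every nonconstant entire function `f : ℂ → ℂ`
attains every complex value with at most one exception: the complement of the
range of `f` contains at most one point. -/
theorem picard_little (f : ℂ → ℂ) (hf : Differentiable ℂ f)
    (hnc : ¬∃ c : ℂ, ∀ z : ℂ, f z = c) :
    (Set.range f)ᶜ.Subsingleton := by
  intro a ha b hb
  by_contra hab
  have hab' : a - b ≠ 0 := sub_ne_zero.mpr hab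
  -- `w ↦ (2 * w - a - b) / (a - b)` sends `a` to `1` and `b` to `-1`.
  obtain ⟨c, hc⟩ := exists_eq_const_of_forall_ne_one_of_forall_ne_neg_one
    (f := fun z ↦ (2 * f z - a - b) / (a - b)) (by fun_prop)
    (fun z h ↦ ha ⟨z, by rw [div_eq_iff hab'] at h; linear_combination h / 2⟩)
    (fun z h ↦ hb ⟨z, by rw [div_eq_iff hab'] at h; linear_combination h / 2⟩)
  refine hnc ⟨(c * (a - b) + a + b) / 2, fun z ↦ ?_⟩
  have hcz := hc z
  rw [div_eq_iff hab'] at hcz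
  linear_combination hcz / 2
end

section
/- Let U ⊆ ℂ be open and let f : U → ℂ be continuous, with f = P + iQ where P and Q are real-valued. If the partial derivatives ∂P/∂x, ∂P/∂y, ∂Q/∂x, ∂Q/∂y exist at every point of U and satisfy the Cauchy–Riemann equations ∂P/∂x = ∂Q/∂y and ∂P/∂y = −∂Q/∂x at every point of U, then f is holomorphic on U. -/
open Complex Set

/-!
Let `Z` be the closed set of points at which `f` is not analytic, and suppose that it meets `U`.
The existence of the partial derivatives and Baire's theorem on `U ∩ Z` give a disc around a point
of `Z` in which `‖f w - f z‖ ≤ M * ‖w - z‖` whenever `z ∈ Z` and `w - z` is horizontal or vertical.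

Fix `z ∈ Z`. In a half disc with centre `z` bounded by a vertical diameter, off `Z`, the quotient
`(f w - f z) / (w - z)` is holomorphic, and it is bounded on the boundary: on the diameter directly,
on the circle because `f` is bounded, and on `Z` by going through the corner with the real part of
`w` and the imaginary part of `z`. By the maximum principle it is bounded inside. So `f` satisfies
`‖f w - f z‖ ≤ K * ‖w - z‖` for all `z ∈ Z` and all `w` nearby, and Cauchy's estimate on the largest
disc around `w` that avoids `Z` bounds `∂f/∂x` by `2 * K` throughout a neighbourhood.

For bounded partial derivatives, Fubini's theorem and the fundamental theorem of calculus on each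
horizontal and vertical segment turn the Cauchy–Riemann equation into the vanishing of `∮ f dz` on
rectangles, and Morera's theorem makes `f` analytic at a point of `Z`, a contradiction.
-/

open Filter Metric MeasureTheory
open scoped Interval Topology

section LineDeriv

variable {V E : Type*} [NormedAddCommGroup V] [NormedSpace ℝ V]
  [NormedAddCommGroup E] [NormedSpace ℝ E]

theorem hasDerivAt_comp_line_of_hasLineDerivAt {f : V → E} {f' : E} {a v : V} {s : ℝ}
    (h : HasLineDerivAt ℝ f f' (a + s • v) v) :
    HasDerivAt (fun t : ℝ ↦ f (a + t • v)) f' s := by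
  have hshift : HasDerivAt (fun t : ℝ ↦ f (a + s • v + t • v)) f' (s - s) := by
    rwa [sub_self]
  simpa only [add_assoc, ← add_smul, add_sub_cancel] using hshift.comp_sub_const s s

theorem aestronglyMeasurable_of_hasLineDerivAt [MeasurableSpace V] [BorelSpace V]
    [SecondCountableTopology V] {μ : Measure V} [μ.IsAddRightInvariant] {U : Set V}
    (hU : IsOpen U) {f f' : V → E} (hf : ContinuousOn f U) {v : V}
    (hf' : ∀ x ∈ U, HasLineDerivAt ℝ f (f' x) x v) :
    AEStronglyMeasurable f' (μ.restrict U) := by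
  have hmeas : AEStronglyMeasurable (U.indicator f) μ :=
    (aestronglyMeasurable_indicator_iff hU.measurableSet).2
      (hf.aestronglyMeasurable hU.measurableSet)
  let quotient (t : ℝ) (x : V) : E := t⁻¹ • (U.indicator f (x + t • v) - U.indicator f x)
  have hquotient (t : ℝ) : AEStronglyMeasurable (quotient t) (μ.restrict U) :=
    (((hmeas.comp_measurePreserving (measurePreserving_add_right μ (t • v))).sub
      hmeas).const_smul t⁻¹).restrict
  refine aestronglyMeasurable_of_tendsto_ae (𝓝[≠] (0 : ℝ)) hquotient ?_
  filter_upwards [ae_restrict_mem hU.measurableSet] with x hx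
  have hind : U.indicator f =ᶠ[𝓝 x] f :=
    eventuallyEq_of_mem (hU.mem_nhds hx) eqOn_indicator
  exact ((hf' x hx).congr_of_eventuallyEq hind).tendsto_slope_zero

theorem isBigO_sub_of_lineDifferentiableAt {f : V → E} {z v : V}
    (h : LineDifferentiableAt ℝ f z v) (ℓ : V →L[ℝ] ℝ) :
    (fun u ↦ f (z + u) - f z) =O[𝓝[{u | ℓ u • v = u}] 0] fun u ↦ u := by
  have hℓ : Tendsto ℓ (𝓝[{u | ℓ u • v = u}] 0) (𝓝 0) :=
    tendsto_nhdsWithin_of_tendsto_nhds (ℓ.continuous.tendsto' 0 0 (map_zero ℓ))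
  have hline : (fun u ↦ f (z + ℓ u • v) - f z) =O[𝓝[{u | ℓ u • v = u}] 0] ℓ := by
    simpa [Function.comp_def] using h.hasLineDerivAt.isBigO_sub.comp_tendsto hℓ
  refine (hline.trans (ℓ.isBigO_id _)).congr' ?_ .rfl
  filter_upwards [self_mem_nhdsWithin] with u hu
  rw [hu]

end LineDeriv

section IteratedIntegral

variable {E : Type*} [NormedAddCommGroup E] {a b c d : ℝ}

theorem ae_intervalIntegrable_of_integrableOn_prod {F : ℝ × ℝ → E}
    (hF : IntegrableOn F ([[a, b]] ×ˢ [[c, d]])) :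
    ∀ᵐ x : ℝ, x ∈ Ι a b → IntervalIntegrable (fun y ↦ F (x, y)) volume c d := by
  rw [← ae_restrict_iff' measurableSet_uIoc]
  have hprod : Integrable F ((volume.restrict (Ι a b)).prod (volume.restrict (Ι c d))) := by
    rw [Measure.prod_restrict, ← Measure.volume_eq_prod]
    exact hF.mono_set (prod_mono uIoc_subset_uIcc uIoc_subset_uIcc)
  filter_upwards [hprod.prod_right_ae] with x hx
  rwa [intervalIntegrable_iff]

theorem integral2_congr_ae [NormedSpace ℝ E] {F G : ℝ × ℝ → E}
    (h : ∀ᵐ p : ℝ × ℝ, p ∈ Ι a b ×ˢ Ι c d → F p = G p) :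
    ∫ x in a..b, ∫ y in c..d, F (x, y) = ∫ x in a..b, ∫ y in c..d, G (x, y) := by
  refine intervalIntegral.integral_congr_ae ?_
  filter_upwards [Measure.ae_ae_of_ae_prod h] with x hslice hx
  refine intervalIntegral.integral_congr_ae ?_
  filter_upwards [hslice] with y hy hyI using hy ⟨hx, hyI⟩

variable [CompleteSpace E]

theorem integral_sub_eq_integral2_of_hasDerivAt_snd [NormedSpace ℝ E] {F F₂ : ℝ × ℝ → E}
    (hF : ∀ x ∈ [[a, b]], ∀ y ∈ [[c, d]], HasDerivAt (fun t ↦ F (x, t)) (F₂ (x, y)) y)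
    (hF₂ : IntegrableOn F₂ ([[a, b]] ×ˢ [[c, d]])) :
    ∫ x in a..b, (F (x, d) - F (x, c)) = ∫ x in a..b, ∫ y in c..d, F₂ (x, y) := by
  refine intervalIntegral.integral_congr_ae ?_
  filter_upwards [ae_intervalIntegrable_of_integrableOn_prod hF₂] with x hint hx
  exact (intervalIntegral.integral_eq_sub_of_hasDerivAt
    (hF x (uIoc_subset_uIcc hx)) (hint hx)).symm

theorem integral_sub_eq_integral2_of_hasDerivAt_fst [NormedSpace ℝ E] {F F₁ : ℝ × ℝ → E}
    (hF : ∀ x ∈ [[a, b]], ∀ y ∈ [[c, d]], HasDerivAt (fun t ↦ F (t, y)) (F₁ (x, y)) x)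
    (hF₁ : IntegrableOn F₁ ([[a, b]] ×ˢ [[c, d]])) :
    ∫ y in c..d, (F (b, y) - F (a, y)) = ∫ x in a..b, ∫ y in c..d, F₁ (x, y) := by
  rw [intervalIntegral_intervalIntegral_swap (F := fun x y ↦ F₁ (x, y))
    (hF₁.mono_set (prod_mono uIoc_subset_uIcc uIoc_subset_uIcc))]
  exact integral_sub_eq_integral2_of_hasDerivAt_snd (F := F ∘ Prod.swap) (F₂ := F₁ ∘ Prod.swap)
    (fun y hy x hx ↦ hF x hx y hy) hF₁.swap

theorem integral_sub_eq_smul_integral_sub [NormedSpace ℂ E] {F F₁ F₂ : ℝ × ℝ → E} {κ : ℂ}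
    (hF₁ : ∀ x ∈ [[a, b]], ∀ y ∈ [[c, d]], HasDerivAt (fun t ↦ F (t, y)) (F₁ (x, y)) x)
    (hF₂ : ∀ x ∈ [[a, b]], ∀ y ∈ [[c, d]], HasDerivAt (fun t ↦ F (x, t)) (F₂ (x, y)) y)
    (hint : IntegrableOn F₁ ([[a, b]] ×ˢ [[c, d]]))
    (hκ : ∀ᵐ p : ℝ × ℝ, p ∈ [[a, b]] ×ˢ [[c, d]] → F₂ p = κ • F₁ p) :
    ∫ x in a..b, (F (x, d) - F (x, c)) = κ • ∫ y in c..d, (F (b, y) - F (a, y)) := by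
  have hrect : MeasurableSet ([[a, b]] ×ˢ [[c, d]]) := measurableSet_uIcc.prod measurableSet_uIcc
  have hint₂ : IntegrableOn F₂ ([[a, b]] ×ˢ [[c, d]]) :=
    (integrableOn_congr_fun_ae ((ae_restrict_iff' hrect).2 hκ)).2 (hint.smul κ)
  calc ∫ x in a..b, (F (x, d) - F (x, c))
    _ = ∫ x in a..b, ∫ y in c..d, F₂ (x, y) :=
      integral_sub_eq_integral2_of_hasDerivAt_snd hF₂ hint₂
    _ = ∫ x in a..b, ∫ y in c..d, κ • F₁ (x, y) :=
      integral2_congr_ae (G := fun p ↦ κ • F₁ p)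
        (hκ.mono fun p hp hpI ↦ hp (prod_mono uIoc_subset_uIcc uIoc_subset_uIcc hpI))
    _ = κ • ∫ x in a..b, ∫ y in c..d, F₁ (x, y) := by
      simp_rw [intervalIntegral.integral_smul]
    _ = κ • ∫ y in c..d, (F (b, y) - F (a, y)) := by
      rw [integral_sub_eq_integral2_of_hasDerivAt_fst hF₁ hint]

end IteratedIntegral

section RealCoordinates

theorem measurePreserving_add_mul_I :
    MeasurePreserving (fun p : ℝ × ℝ ↦ (p.1 + p.2 * I : ℂ)) :=
  (volume_preserving_equiv_real_prod.symm _).congr (by fun_prop)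
    (.of_forall fun _ ↦ mk_eq_add_mul_I _ _)

theorem measurableEmbedding_add_mul_I :
    MeasurableEmbedding (fun p : ℝ × ℝ ↦ (p.1 + p.2 * I : ℂ)) := by
  convert measurableEquivRealProd.symm.measurableEmbedding using 2 with p
  exact (mk_eq_add_mul_I _ _).symm

theorem integrableOn_comp_add_mul_I {E : Type*} [NormedAddCommGroup E] {g : ℂ → E} {s t : Set ℝ}
    (hg : IntegrableOn g (s ×ℂ t)) :
    IntegrableOn (fun p : ℝ × ℝ ↦ g (p.1 + p.2 * I)) (s ×ˢ t) := by
  have hpre : (fun p : ℝ × ℝ ↦ (p.1 + p.2 * I : ℂ)) ⁻¹' (s ×ℂ t) = s ×ˢ t := by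
    ext; simp [mem_reProdIm]
  rw [← hpre]
  exact (measurePreserving_add_mul_I.integrableOn_comp_preimage measurableEmbedding_add_mul_I).2 hg

end RealCoordinates

section BoundedPartials

variable {E : Type*} [NormedAddCommGroup E] [NormedSpace ℂ E]
  {U : Set ℂ} {f : ℂ → E}

theorem hasDerivAt_comp_horizontal {x y : ℝ} (h : LineDifferentiableAt ℝ f (x + y * I) 1) :
    HasDerivAt (fun t : ℝ ↦ f (t + y * I)) (lineDeriv ℝ f (x + y * I) 1) x := by
  have hline : (x + y * I : ℂ) = y * I + x • 1 := by rw [real_smul, mul_one, add_comm]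
  have hderiv := h.hasLineDerivAt
  rw [hline] at hderiv ⊢
  simpa only [real_smul, mul_one, add_comm] using hasDerivAt_comp_line_of_hasLineDerivAt hderiv

theorem hasDerivAt_comp_vertical {x y : ℝ} (h : LineDifferentiableAt ℝ f (x + y * I) I) :
    HasDerivAt (fun t : ℝ ↦ f (x + t * I)) (lineDeriv ℝ f (x + y * I) I) y := by
  simp only [← real_smul] at h ⊢
  exact hasDerivAt_comp_line_of_hasLineDerivAt h.hasLineDerivAt

variable [CompleteSpace E]

theorem isConservativeOn_of_locallyIntegrableOn_lineDeriv (hf : ContinuousOn f U)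
    (hx : ∀ z ∈ U, LineDifferentiableAt ℝ f z 1) (hy : ∀ z ∈ U, LineDifferentiableAt ℝ f z I)
    (hint : LocallyIntegrableOn (fun z ↦ lineDeriv ℝ f z 1) U)
    (hCR : ∀ᵐ z, z ∈ U → lineDeriv ℝ f z I = I • lineDeriv ℝ f z 1) :
    IsConservativeOn f U := by
  intro z w hzw
  have hcoord : ∀ x ∈ [[z.re, w.re]], ∀ y ∈ [[z.im, w.im]], (x + y * I : ℂ) ∈ U :=
    fun x hx y hy ↦ hzw (by simp [Rectangle, mem_reProdIm, hx, hy])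
  have hint_rect := integrableOn_comp_add_mul_I
    (hint.integrableOn_compact_subset hzw (isCompact_uIcc.reProdIm isCompact_uIcc))
  have hCR_rect : ∀ᵐ p : ℝ × ℝ, p ∈ [[z.re, w.re]] ×ˢ [[z.im, w.im]] →
      lineDeriv ℝ f (p.1 + p.2 * I) I = I • lineDeriv ℝ f (p.1 + p.2 * I) 1 := by
    filter_upwards [measurePreserving_add_mul_I.quasiMeasurePreserving.ae hCR] with p hp hmem
    exact hp (hcoord _ hmem.1 _ hmem.2)
  have hgreen := integral_sub_eq_smul_integral_sub
    (F := fun p ↦ f (p.1 + p.2 * I)) (F₁ := fun p ↦ lineDeriv ℝ f (p.1 + p.2 * I) 1)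
    (F₂ := fun p ↦ lineDeriv ℝ f (p.1 + p.2 * I) I)
    (fun x hx' y hy' ↦ hasDerivAt_comp_horizontal (hx _ (hcoord x hx' y hy')))
    (fun x hx' y hy' ↦ hasDerivAt_comp_vertical (hy _ (hcoord x hx' y hy')))
    hint_rect hCR_rect
  have hhor (y : ℝ) (hy : y ∈ [[z.im, w.im]]) :
      IntervalIntegrable (fun x : ℝ ↦ f (x + y * I)) volume z.re w.re :=
    (hf.comp (by fun_prop) fun x hx ↦ hcoord x hx y hy).intervalIntegrable
  have hver (x : ℝ) (hx : x ∈ [[z.re, w.re]]) :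
      IntervalIntegrable (fun y : ℝ ↦ f (x + y * I)) volume z.im w.im :=
    (hf.comp (by fun_prop) fun y hy ↦ hcoord x hx y hy).intervalIntegrable
  rw [intervalIntegral.integral_sub (hhor _ right_mem_uIcc) (hhor _ left_mem_uIcc),
    intervalIntegral.integral_sub (hver _ right_mem_uIcc) (hver _ left_mem_uIcc),
    smul_sub] at hgreen
  rw [← add_eq_zero_iff_eq_neg, wedgeIntegral_add_wedgeIntegral_eq, add_sub_assoc, ← hgreen]
  abel

theorem differentiableOn_of_norm_lineDeriv_le (hU : IsOpen U) (hf : ContinuousOn f U)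
    (hx : ∀ z ∈ U, LineDifferentiableAt ℝ f z 1) (hy : ∀ z ∈ U, LineDifferentiableAt ℝ f z I)
    {K : ℝ} (hK : ∀ z ∈ U, ‖lineDeriv ℝ f z 1‖ ≤ K)
    (hCR : ∀ᵐ z, z ∈ U → lineDeriv ℝ f z I = I • lineDeriv ℝ f z 1) :
    DifferentiableOn ℂ f U := by
  have hmeas : AEStronglyMeasurable (fun z ↦ lineDeriv ℝ f z 1) (volume.restrict U) :=
    aestronglyMeasurable_of_hasLineDerivAt hU hf fun z hz ↦ (hx z hz).hasLineDerivAt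
  have hint : LocallyIntegrableOn (fun z ↦ lineDeriv ℝ f z 1) U :=
    locallyIntegrableOn_of_locallyIntegrable_restrict <|
      (locallyIntegrable_const K).mono hmeas <| by
        filter_upwards [ae_restrict_mem hU.measurableSet] with z hz
        exact (hK z hz).trans (le_abs_self K)
  exact (isConservativeOn_and_continuousOn_iff_isDifferentiableOn hU).1
    ⟨isConservativeOn_of_locallyIntegrableOn_lineDeriv hf hx hy hint hCR, hf⟩

end BoundedPartials

theorem norm_le_norm_add_of_inner_nonneg {F : Type*} [NormedAddCommGroup F] [InnerProductSpace ℝ F]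
    {x y : F} (h : 0 ≤ inner ℝ x y) : ‖x‖ ≤ ‖x + y‖ := by
  refine (sq_le_sq₀ (norm_nonneg _) (norm_nonneg _)).1 ?_
  rw [norm_add_sq_real]
  linarith [sq_nonneg ‖y‖]

section MaximumPrinciple

variable {E : Type*} [NormedAddCommGroup E] [NormedSpace ℂ E] {f : ℂ → E} {z : ℂ} {K : ℝ}

theorem norm_le_mul_norm_sub_of_frontier_of_inner_nonneg {V : Set ℂ} (hV : Bornology.IsBounded V)
    {u : ℂ} (hu : u ≠ 0) (hside : ∀ w ∈ V, 0 ≤ inner ℝ (w - z) u) (hf : DiffContOnCl ℂ f V)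
    (hK : 0 ≤ K) (hbound : ∀ w ∈ frontier V, ‖f w‖ ≤ K * ‖w - z‖) :
    ∀ w ∈ closure V, ‖f w‖ ≤ K * ‖w - z‖ := by
  intro w hw
  have hside_cl : ∀ w ∈ closure V, 0 ≤ inner ℝ (w - z) u :=
    closure_minimal hside (t := {w | 0 ≤ inner ℝ (w - z) u})
      (isClosed_le continuous_const (by fun_prop))
  have hinner (δ : ℝ) (hδ : 0 < δ) (w : ℂ) (hw : w ∈ closure V) :
      0 ≤ inner ℝ (w - z) (δ • u) := by
    rw [real_inner_smul_right]
    exact mul_nonneg hδ.le (hside_cl w hw)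
  have hpos (δ : ℝ) (hδ : 0 < δ) (w : ℂ) (hw : w ∈ closure V) : 0 < ‖w - z + δ • u‖ := by
    have hinner_symm := hinner δ hδ w hw
    rw [real_inner_comm] at hinner_symm
    rw [add_comm]
    exact (norm_pos_iff.2 (smul_ne_zero hδ.ne' hu)).trans_le
      (norm_le_norm_add_of_inner_nonneg hinner_symm)
  -- The shift by `δ • u` keeps the denominator away from `0` even when `z ∈ closure V`.
  have hshift (δ : ℝ) (hδ : 0 < δ) : ‖f w‖ ≤ K * ‖w - z + δ • u‖ := by
    have hquot : DiffContOnCl ℂ (fun w ↦ (w - z + δ • u)⁻¹ • f w) V :=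
      (((differentiable_id.sub_const z).add_const (δ • u)).diffContOnCl.inv
        fun w hw ↦ norm_pos_iff.1 (hpos δ hδ w hw)).smul hf
    have hle := norm_le_of_forall_mem_frontier_norm_le hV hquot (C := K) (fun x hx ↦ ?_) hw
    · rwa [norm_smul, norm_inv, inv_mul_le_iff₀ (hpos δ hδ w hw), mul_comm] at hle
    · have hx' := frontier_subset_closure hx
      rw [norm_smul, norm_inv, inv_mul_le_iff₀ (hpos δ hδ x hx'), mul_comm]
      exact (hbound x hx).trans
        (mul_le_mul_of_nonneg_left (norm_le_norm_add_of_inner_nonneg (hinner δ hδ x hx')) hK)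
  have hlim : Tendsto (fun δ : ℝ ↦ K * ‖w - z + δ • u‖) (𝓝[>] 0) (𝓝 (K * ‖w - z‖)) :=
    tendsto_nhdsWithin_of_tendsto_nhds <| Continuous.tendsto' (by fun_prop) _ _ (by simp)
  exact ge_of_tendsto hlim (eventually_mem_nhdsWithin.mono hshift)

theorem norm_le_mul_norm_sub_of_closedBall {Z : Set ℂ} (hZ : IsClosed Z) {ρ : ℝ}
    (hf : ContinuousOn f (closedBall z ρ)) (hd : DifferentiableOn ℂ f (ball z ρ \ Z)) (hK : 0 ≤ K)
    (hbound : ∀ w ∈ closedBall z ρ, w ∈ Z ∨ w.re = z.re ∨ w ∈ sphere z ρ →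
      ‖f w‖ ≤ K * ‖w - z‖) :
    ∀ w ∈ closedBall z ρ, ‖f w‖ ≤ K * ‖w - z‖ := by
  intro w hw
  -- The maximum principle applies on the half of the disc that contains `w`.
  by_contra! hlt
  have hw_re : w.re ≠ z.re := fun h ↦ (hbound w hw (.inr (.inl h))).not_gt hlt
  let c : ℝ := (w - z).re
  have hc : c ≠ 0 := sub_ne_zero.2 hw_re
  let V : Set ℂ := {x | 0 < c * (x - z).re} ∩ (ball z ρ \ Z)
  have hV : IsOpen V := (isOpen_lt continuous_const (by fun_prop)).inter (isOpen_ball.sdiff hZ)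
  have hV_ball : closure V ⊆ closedBall z ρ :=
    closure_minimal (fun x hx ↦ ball_subset_closedBall hx.2.1) isClosed_closedBall
  have hV_side : closure V ⊆ {x | 0 ≤ c * (x - z).re} :=
    closure_minimal (fun x hx ↦ show 0 ≤ c * (x - z).re from hx.1.le)
      (isClosed_le continuous_const (by fun_prop))
  have hV_mem (x : ℂ) (hx : x ∈ closedBall z ρ) (hside : 0 ≤ c * (x - z).re)
      (hexc : ¬(x ∈ Z ∨ x.re = z.re ∨ x ∈ sphere z ρ)) : x ∈ V := by
    push Not at hexc
    exact ⟨hside.lt_of_ne (mul_ne_zero hc (sub_ne_zero.2 hexc.2.1)).symm,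
      (mem_closedBall.1 hx).lt_of_ne hexc.2.2, hexc.1⟩
  refine (norm_le_mul_norm_sub_of_frontier_of_inner_nonneg (V := V) (u := c)
    (isBounded_ball.subset fun x hx ↦ hx.2.1) (ofReal_ne_zero.2 hc) (fun x hx ↦ ?_)
    ⟨hd.mono inter_subset_right, hf.mono hV_ball⟩ hK (fun x hx ↦ ?_) w
    (subset_closure ?_)).not_gt hlt
  · simpa [Complex.inner, mul_comm] using hx.1.le
  · rw [hV.frontier_eq] at hx
    refine hbound x (hV_ball hx.1) ?_
    by_contra hexc
    exact hx.2 (hV_mem x (hV_ball hx.1) (hV_side hx.1) hexc)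
  · exact hV_mem w hw (mul_self_nonneg c) fun hexc ↦ (hbound w hw hexc).not_gt hlt

theorem norm_sub_le_mul_of_axes {Z : Set ℂ} (hZ : IsClosed Z) (hz : z ∈ Z) {ρ M C : ℝ}
    (hρ : 0 < ρ) (hf : ContinuousOn f (closedBall z ρ)) (hd : DifferentiableOn ℂ f (ball z ρ \ Z))
    (hC : ∀ w ∈ closedBall z ρ, ‖f w - f z‖ ≤ C) (hM : 0 ≤ M)
    (haxes : ∀ p ∈ Z ∩ closedBall z ρ, ∀ w ∈ closedBall z ρ, w.re = p.re ∨ w.im = p.im →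
      ‖f w - f p‖ ≤ M * ‖w - p‖) :
    ∀ w ∈ closedBall z ρ, ‖f w - f z‖ ≤ (2 * M + C / ρ) * ‖w - z‖ := by
  have hzball : z ∈ closedBall z ρ := mem_closedBall_self hρ.le
  have hCρ : 0 ≤ C / ρ := div_nonneg ((norm_nonneg _).trans (hC z hzball)) hρ.le
  refine norm_le_mul_norm_sub_of_closedBall hZ (hf.sub continuousOn_const)
    (hd.sub_const _) (by positivity) fun w hw hcase ↦ ?_
  rcases hcase with hwZ | hre | hsphere
  · let corner : ℂ := ⟨w.re, z.im⟩
    have hcorner_z : ‖corner - z‖ ≤ ‖w - z‖ := by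
      have : corner - z = ((w - z).re : ℝ) := by apply Complex.ext <;> simp [corner]
      rw [this, norm_real]
      exact abs_re_le_norm _
    have hcorner_w : ‖corner - w‖ ≤ ‖w - z‖ := by
      have : corner - w = -((w - z).im * I) := by apply Complex.ext <;> simp [corner]
      rw [this, norm_neg, norm_mul, norm_I, mul_one, norm_real]
      exact abs_im_le_norm _
    have hcorner : corner ∈ closedBall z ρ :=
      mem_closedBall_iff_norm.2 (hcorner_z.trans (mem_closedBall_iff_norm.1 hw))
    calc ‖f w - f z‖ ≤ ‖f corner - f w‖ + ‖f corner - f z‖ := by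
          rw [norm_sub_rev (f corner)]; exact norm_sub_le_norm_sub_add_norm_sub _ _ _
      _ ≤ M * ‖corner - w‖ + M * ‖corner - z‖ :=
          add_le_add (haxes w ⟨hwZ, hw⟩ corner hcorner (.inl rfl))
            (haxes z ⟨hz, hzball⟩ corner hcorner (.inr rfl))
      _ ≤ M * ‖w - z‖ + M * ‖w - z‖ := by gcongr
      _ ≤ (2 * M + C / ρ) * ‖w - z‖ := by
          nlinarith [mul_nonneg hCρ (norm_nonneg (w - z))]
  · refine (haxes z ⟨hz, hzball⟩ w hw (.inl hre)).trans ?_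
    gcongr
    linarith
  · rw [mem_sphere_iff_norm] at hsphere
    rw [hsphere, add_mul, div_mul_cancel₀ _ hρ.ne']
    exact (hC w hw).trans (le_add_of_nonneg_left (by positivity))

theorem norm_deriv_le_of_forall_mem_sphere_norm_sub_le {p w : ℂ} {r : ℝ} (hr : 0 < r)
    (hf : DiffContOnCl ℂ f (ball w r)) (hp : p ∈ closedBall w r) (hK : 0 ≤ K)
    (hbound : ∀ x ∈ sphere w r, ‖f x - f p‖ ≤ K * ‖x - p‖) : ‖deriv f w‖ ≤ 2 * K := by
  have hsphere : ∀ x ∈ sphere w r, ‖f x - f p‖ ≤ K * (2 * r) := fun x hx ↦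
    (hbound x hx).trans <| mul_le_mul_of_nonneg_left (by
      rw [← dist_eq_norm, two_mul]
      exact (dist_triangle_right x p w).trans (add_le_add (mem_sphere.1 hx).le hp)) hK
  calc ‖deriv f w‖ = ‖deriv (fun x ↦ f x - f p) w‖ := by rw [deriv_sub_const]
    _ ≤ K * (2 * r) / r :=
      norm_deriv_le_of_forall_mem_sphere_norm_le hr (hf.sub diffContOnCl_const) hsphere
    _ = 2 * K := by field_simp

variable {Z : Set ℂ} {r : ℝ}

theorem norm_deriv_le_of_forall_norm_sub_le (hZ : IsClosed Z) (hz : z ∈ Z)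
    (hf : ContinuousOn f (ball z r)) (hd : DifferentiableOn ℂ f (ball z r \ Z)) (hK : 0 ≤ K)
    (hLip : ∀ p ∈ Z ∩ ball z r, ∀ w ∈ ball z r, ‖f w - f p‖ ≤ K * ‖w - p‖) :
    ∀ w ∈ ball z (r / 2) \ Z, ‖deriv f w‖ ≤ 2 * K := by
  rintro w ⟨hw, hwZ⟩
  obtain ⟨p, hpZ, hpw⟩ := hZ.exists_infDist_eq_dist ⟨z, hz⟩ w
  have hpos : 0 < dist w p := dist_pos.2 fun h ↦ hwZ (h ▸ hpZ)
  have hdist : dist w p < r / 2 := (hpw ▸ infDist_le_dist_of_mem hz).trans_lt hw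
  have hsub : closedBall w (dist w p) ⊆ ball z r :=
    closedBall_subset_ball' (by linarith [mem_ball.1 hw])
  have hdisj : ball w (dist w p) ⊆ ball z r \ Z := fun x hx ↦
    ⟨hsub (ball_subset_closedBall hx), fun hxZ ↦
      (hpw ▸ infDist_le_dist_of_mem hxZ).not_gt (mem_ball'.1 hx)⟩
  have hpball : p ∈ closedBall w (dist w p) := mem_closedBall'.2 le_rfl
  exact norm_deriv_le_of_forall_mem_sphere_norm_sub_le hpos
    ⟨hd.mono hdisj, hf.mono (closure_ball_subset_closedBall.trans hsub)⟩ hpball hK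
    fun x hx ↦ hLip p ⟨hpZ, hsub hpball⟩ x (hsub (sphere_subset_closedBall hx))

theorem norm_lineDeriv_le_of_forall_norm_sub_le (hZ : IsClosed Z) (hz : z ∈ Z)
    (hf : ContinuousOn f (ball z r)) (hd : DifferentiableOn ℂ f (ball z r \ Z)) (hK : 0 ≤ K)
    (hLip : ∀ p ∈ Z ∩ ball z r, ∀ w ∈ ball z r, ‖f w - f p‖ ≤ K * ‖w - p‖) (v : ℂ) :
    ∀ w ∈ ball z (r / 2), ‖lineDeriv ℝ f w v‖ ≤ 2 * K * ‖v‖ := by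
  intro w hw
  have hwr : w ∈ ball z r := ball_subset_ball (by linarith [pos_of_mem_ball hw]) hw
  by_cases hwZ : w ∈ Z
  · refine (norm_lineDeriv_le_of_lip' ℝ hK ?_).trans (by gcongr; linarith)
    filter_upwards [isOpen_ball.mem_nhds hwr] with x hx using hLip w ⟨hwZ, hwr⟩ x hx
  · have hdiff : DifferentiableAt ℂ f w :=
      hd.differentiableAt ((isOpen_ball.sdiff hZ).mem_nhds ⟨hwr, hwZ⟩)
    calc ‖lineDeriv ℝ f w v‖ = ‖deriv f w‖ * ‖v‖ := by
          rw [(hdiff.restrictScalars ℝ).lineDeriv_eq_fderiv, hdiff.fderiv_restrictScalars ℝ]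
          simp [norm_smul, mul_comm]
      _ ≤ 2 * K * ‖v‖ := by
          gcongr
          exact norm_deriv_le_of_forall_norm_sub_le hZ hz hf hd hK hLip w ⟨hw, hwZ⟩

end MaximumPrinciple

section Baire

variable {V E : Type*} [NormedAddCommGroup V] [NormedAddCommGroup E] {U D : Set V} {f : V → E}

/-- The points at which `f` satisfies a Lipschitz estimate with constant `n` along the directions in
`D`, for increments of size at most `1 / (n + 1)` that stay in `U`. -/
def directionalLipschitzSet (f : V → E) (U D : Set V) (n : ℕ) : Set V :=
  {z | ∀ u ∈ D, ‖u‖ ≤ 1 / (n + 1 : ℝ) → z + u ∈ U → ‖f (z + u) - f z‖ ≤ n * ‖u‖}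

theorem isClosed_preimage_directionalLipschitzSet (hU : IsOpen U) (hf : ContinuousOn f U)
    {S : Set V} (hS : S ⊆ U) (D : Set V) (n : ℕ) :
    IsClosed ((↑) ⁻¹' directionalLipschitzSet f U D n : Set S) := by
  have hfS : Continuous fun z : S ↦ f z := hf.comp_continuous continuous_subtype_val fun z ↦ hS z.2
  have hinter : ((↑) ⁻¹' directionalLipschitzSet f U D n : Set S) =
      ⋂ u ∈ D, ⋂ _ : ‖u‖ ≤ 1 / (n + 1 : ℝ),
        {z : S | (z + u : V) ∈ U → ‖f (z + u) - f z‖ ≤ n * ‖u‖} := by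
    ext
    simp [directionalLipschitzSet]
  rw [hinter]
  refine isClosed_biInter fun u _ ↦ isClosed_iInter fun _ ↦ ?_
  rw [← isOpen_compl_iff]
  have hshift : ContinuousOn (fun z : S ↦ f (z + u)) {z : S | (z + u : V) ∈ U} :=
    hf.comp (by fun_prop) fun z hz ↦ hz
  convert (hshift.sub hfS.continuousOn).norm.isOpen_inter_preimage
    (hU.preimage (by fun_prop)) (isOpen_Ioi (a := n * ‖u‖)) using 1
  ext z
  simp

theorem exists_mem_directionalLipschitzSet {z : V}
    (h : (fun u ↦ f (z + u) - f z) =O[𝓝[D] 0] fun u ↦ u) :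
    ∃ n : ℕ, z ∈ directionalLipschitzSet f U D n := by
  obtain ⟨c, hc⟩ := h.bound
  obtain ⟨ε, hε, hball⟩ := Metric.mem_nhdsWithin_iff.1 hc
  obtain ⟨n, hn⟩ := exists_nat_gt (max c ε⁻¹)
  refine ⟨n, fun u hu hun _ ↦ ?_⟩
  have huε : ‖u‖ < ε := hun.trans_lt <| by
    rw [one_div_lt (by positivity) hε, one_div]
    linarith [le_max_right c ε⁻¹]
  refine (hball ⟨mem_ball_zero_iff.2 huε, hu⟩).trans ?_
  gcongr
  exact (le_max_left c ε⁻¹).trans hn.le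

theorem exists_ball_forall_norm_sub_le (hU : IsOpen U) (hf : ContinuousOn f U)
    {S : Set V} (hS : S ⊆ U) (hne : S.Nonempty) [BaireSpace S]
    (hbigO : ∀ z ∈ S, (fun u ↦ f (z + u) - f z) =O[𝓝[D] 0] fun u ↦ u) :
    ∃ z₀ ∈ S, ∃ R > 0, ∃ M ≥ 0, closedBall z₀ R ⊆ U ∧
      ∀ z ∈ S ∩ ball z₀ R, ∀ w ∈ ball z₀ R, w - z ∈ D → ‖f w - f z‖ ≤ M * ‖w - z‖ := by
  have : Nonempty S := hne.to_subtype
  have hcover : ⋃ n, ((↑) ⁻¹' directionalLipschitzSet f U D n : Set S) = univ := by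
    exact iUnion_eq_univ_iff.2 fun z ↦ exists_mem_directionalLipschitzSet (hbigO z z.2)
  obtain ⟨n, z₀, hz₀⟩ := nonempty_interior_of_iUnion_of_closed
    (isClosed_preimage_directionalLipschitzSet hU hf hS D) hcover
  obtain ⟨ε, hε, hball⟩ := Metric.mem_nhds_iff.1 (mem_interior_iff_mem_nhds.1 hz₀)
  obtain ⟨δ, hδ, hδU⟩ := Metric.nhds_basis_closedBall.mem_iff.1 (hU.mem_nhds (hS z₀.2))
  let R : ℝ := min (min ε δ) (1 / (2 * (n + 1)))
  have hRn : 2 * R ≤ 1 / (n + 1) :=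
    calc 2 * R ≤ 2 * (1 / (2 * (n + 1))) := by gcongr; exact min_le_right _ _
      _ = 1 / (n + 1 : ℝ) := by field_simp
  have hRU : closedBall (z₀ : V) R ⊆ U :=
    (closedBall_subset_closedBall ((min_le_left _ _).trans (min_le_right _ _))).trans hδU
  refine ⟨z₀, z₀.2, R, by positivity, n, n.cast_nonneg, hRU, ?_⟩
  rintro z ⟨hzS, hz⟩ w hw hwz
  have hzmem : z ∈ directionalLipschitzSet f U D n :=
    hball (show (⟨z, hzS⟩ : S) ∈ ball z₀ ε from
      ball_subset_ball ((min_le_left _ _).trans (min_le_left _ _)) hz)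
  have hdist : ‖w - z‖ ≤ 1 / (n + 1 : ℝ) := by
    rw [← dist_eq_norm]
    linarith [dist_triangle_right w z z₀, mem_ball.1 hz, mem_ball.1 hw]
  simpa using hzmem (w - z) hwz hdist (by simpa using hRU (ball_subset_closedBall hw))

end Baire

section LoomanMenchoff

variable {E : Type*} [NormedAddCommGroup E] [NormedSpace ℂ E] {f : ℂ → E} {z : ℂ}

theorem isBigO_sub_nhdsWithin_axes (hx : LineDifferentiableAt ℝ f z 1)
    (hy : LineDifferentiableAt ℝ f z I) :
    (fun u ↦ f (z + u) - f z) =O[𝓝[{u | u.re = 0 ∨ u.im = 0}] 0] fun u ↦ u := by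
  have haxes : {u : ℂ | u.re = 0 ∨ u.im = 0} ⊆
      {u | reCLM u • 1 = u} ∪ {u | imCLM u • I = u} := by
    rintro u (hu | hu)
    · exact .inr (by apply Complex.ext <;> simp [hu])
    · exact .inl (by apply Complex.ext <;> simp [hu])
  refine Asymptotics.IsBigO.mono ?_ (nhdsWithin_mono 0 haxes)
  rw [nhdsWithin_union]
  exact (isBigO_sub_of_lineDifferentiableAt hx reCLM).sup
    (isBigO_sub_of_lineDifferentiableAt hy imCLM)

theorem exists_forall_norm_lineDeriv_le_of_axes {Z : Set ℂ} (hZ : IsClosed Z) (hz : z ∈ Z)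
    {R M : ℝ} (hR : 0 < R) (hf : ContinuousOn f (closedBall z R))
    (hd : DifferentiableOn ℂ f (ball z R \ Z)) (hM : 0 ≤ M)
    (haxes : ∀ p ∈ Z ∩ ball z R, ∀ w ∈ ball z R, w.re = p.re ∨ w.im = p.im →
      ‖f w - f p‖ ≤ M * ‖w - p‖) (v : ℂ) :
    ∃ K, ∀ w ∈ ball z (R / 8), ‖lineDeriv ℝ f w v‖ ≤ K := by
  obtain ⟨C, hC⟩ := (isCompact_closedBall z R).exists_bound_of_continuousOn hf
  have hC₀ : 0 ≤ C := (norm_nonneg _).trans (hC z (mem_closedBall_self hR.le))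
  have hsub {p : ℂ} (hp : p ∈ ball z (R / 4)) : closedBall p (R / 2) ⊆ ball z R :=
    closedBall_subset_ball' (by linarith [mem_ball.1 hp])
  let K : ℝ := 2 * M + (C + C) / (R / 2)
  have hLip : ∀ p ∈ Z ∩ ball z (R / 4), ∀ w ∈ ball z (R / 4), ‖f w - f p‖ ≤ K * ‖w - p‖ := by
    rintro p ⟨hpZ, hp⟩ w hw
    have hpR := (hsub hp).trans ball_subset_closedBall
    refine norm_sub_le_mul_of_axes hZ hpZ (half_pos hR) (hf.mono hpR)
      (hd.mono (sdiff_subset_sdiff_left (ball_subset_closedBall.trans (hsub hp))))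
      (fun x hx ↦ norm_sub_le_of_le (hC x (hpR hx))
        (hC p (hpR (mem_closedBall_self (half_pos hR).le)))) hM
      (fun q hq x hx ↦ haxes q ⟨hq.1, hsub hp hq.2⟩ x (hsub hp hx)) w ?_
    rw [mem_closedBall]
    linarith [dist_triangle_right w p z, mem_ball.1 hp, mem_ball.1 hw]
  have hquarter : ball z (R / 4) ⊆ ball z R := ball_subset_ball (by linarith)
  refine ⟨2 * K * ‖v‖, fun w hw ↦ norm_lineDeriv_le_of_forall_norm_sub_le (r := R / 4) hZ hz
    (hf.mono (hquarter.trans ball_subset_closedBall)) (hd.mono (sdiff_subset_sdiff_left hquarter))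
    (by positivity) hLip v w ?_⟩
  convert hw using 2
  ring

theorem looman_menchoff_general [CompleteSpace E] {U : Set ℂ} (hU : IsOpen U)
    (hf : ContinuousOn f U) (hx : ∀ z ∈ U, LineDifferentiableAt ℝ f z 1)
    (hy : ∀ z ∈ U, LineDifferentiableAt ℝ f z I)
    (hCR : ∀ᵐ z, z ∈ U → lineDeriv ℝ f z I = I • lineDeriv ℝ f z 1) :
    DifferentiableOn ℂ f U := by
  let Z : Set ℂ := {z | AnalyticAt ℂ f z}ᶜ
  have hZ : IsClosed Z := (isOpen_analyticAt ℂ f).isClosed_compl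
  suffices hempty : ¬(U ∩ Z).Nonempty from fun z hz ↦ by
    have hz_analytic : AnalyticAt ℂ f z := by_contra fun hzZ ↦ hempty ⟨z, hz, hzZ⟩
    exact hz_analytic.differentiableAt.differentiableWithinAt
  intro hne
  have : LocallyCompactSpace ↥(U ∩ Z) :=
    (hU.isLocallyClosed.inter hZ.isLocallyClosed).locallyCompactSpace
  obtain ⟨z₀, ⟨-, hz₀⟩, R, hR, M, hM, hRU, hLip⟩ :=
    exists_ball_forall_norm_sub_le hU hf inter_subset_left hne
      fun z hz ↦ isBigO_sub_nhdsWithin_axes (hx z hz.1) (hy z hz.1)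
  have hR_sub : ball z₀ R ⊆ U := ball_subset_closedBall.trans hRU
  have hd : DifferentiableOn ℂ f (ball z₀ R \ Z) := fun z hz ↦
    (not_not.1 hz.2 : AnalyticAt ℂ f z).differentiableAt.differentiableWithinAt
  obtain ⟨K, hK⟩ := exists_forall_norm_lineDeriv_le_of_axes hZ hz₀ hR (hf.mono hRU) hd hM
    (fun p hp w hw h ↦ hLip p ⟨⟨hR_sub hp.2, hp.1⟩, hp.2⟩ w hw
      (by simpa [sub_eq_zero] using h)) 1
  have hsmall : ball z₀ (R / 8) ⊆ U := (ball_subset_ball (by linarith)).trans hR_sub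
  have hholo : DifferentiableOn ℂ f (ball z₀ (R / 8)) :=
    differentiableOn_of_norm_lineDeriv_le isOpen_ball (hf.mono hsmall)
      (fun z hz ↦ hx z (hsmall hz)) (fun z hz ↦ hy z (hsmall hz)) hK
      (hCR.mono fun z hz hzball ↦ hz (hsmall hzball))
  exact hz₀ (hholo.analyticAt (ball_mem_nhds z₀ (by positivity)))

end LoomanMenchoff

theorem hasLineDerivAt_of_re_of_im {V : Type*} [AddCommGroup V] [Module ℝ V]
    {f : V → ℂ} {z v : V} {a b : ℝ}
    (hre : HasLineDerivAt ℝ (fun x ↦ (f x).re) a z v)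
    (him : HasLineDerivAt ℝ (fun x ↦ (f x).im) b z v) :
    HasLineDerivAt ℝ f (a + b * I) z v := by
  refine (hre.ofReal_comp.add (him.ofReal_comp.mul_const I)).congr_of_eventuallyEq ?_
  exact .of_forall fun t ↦ (re_add_im (f (z + t • v))).symm

theorem exists_hasLineDerivAt_of_cauchyRiemann {f : ℂ → ℂ} {z : ℂ} {px py qx qy : ℝ}
    (hpx : HasDerivAt (fun t : ℝ ↦ (f (z + t)).re) px 0)
    (hpy : HasDerivAt (fun t : ℝ ↦ (f (z + t * I)).re) py 0)
    (hqx : HasDerivAt (fun t : ℝ ↦ (f (z + t)).im) qx 0)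
    (hqy : HasDerivAt (fun t : ℝ ↦ (f (z + t * I)).im) qy 0)
    (hpxqy : px = qy) (hpyqx : py = -qx) :
    ∃ d : ℂ, HasLineDerivAt ℝ f d z 1 ∧ HasLineDerivAt ℝ f (I • d) z I := by
  have hx : HasLineDerivAt ℝ f (px + qx * I) z 1 :=
    hasLineDerivAt_of_re_of_im (by simpa [HasLineDerivAt] using hpx)
      (by simpa [HasLineDerivAt] using hqx)
  have hy : HasLineDerivAt ℝ f (py + qy * I) z I :=
    hasLineDerivAt_of_re_of_im (by simpa [HasLineDerivAt] using hpy)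
      (by simpa [HasLineDerivAt] using hqy)
  have hCR : (py + qy * I : ℂ) = I • (px + qx * I) := by
    apply Complex.ext <;> simp [hpxqy, hpyqx]
  exact ⟨_, hx, hCR ▸ hy⟩

/-- **The Looman–Menchoff theorem** (proved by Montel): if `f = P + iQ` is
continuous on an open set `U ⊆ ℂ` and the four partial derivatives
`∂P/∂x, ∂P/∂y, ∂Q/∂x, ∂Q/∂y` exist at every point of `U` and satisfy the
Cauchy–Riemann equations `∂P/∂x = ∂Q/∂y` and `∂P/∂y = -∂Q/∂x` there, then `f`
is holomorphic on `U`.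

The partial derivative in the `x`-direction (resp. `y`-direction) at `z` is
the derivative at `t = 0` of `t ↦ (f (z + t))` (resp. `t ↦ (f (z + t * I))`)
for real `t`. -/
theorem looman_menchoff (U : Set ℂ) (hU : IsOpen U) (f : ℂ → ℂ)
    (hcont : ContinuousOn f U)
    (hCR : ∀ z ∈ U, ∃ px py qx qy : ℝ,
      HasDerivAt (fun t : ℝ => (f (z + (t : ℂ))).re) px 0 ∧
      HasDerivAt (fun t : ℝ => (f (z + (t : ℂ) * Complex.I)).re) py 0 ∧
      HasDerivAt (fun t : ℝ => (f (z + (t : ℂ))).im) qx 0 ∧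
      HasDerivAt (fun t : ℝ => (f (z + (t : ℂ) * Complex.I)).im) qy 0 ∧
      px = qy ∧ py = -qx) :
    DifferentiableOn ℂ f U := by
  have hline : ∀ z ∈ U, ∃ d : ℂ, HasLineDerivAt ℝ f d z 1 ∧ HasLineDerivAt ℝ f (I • d) z I := by
    intro z hz
    obtain ⟨px, py, qx, qy, hpx, hpy, hqx, hqy, hpxqy, hpyqx⟩ := hCR z hz
    exact exists_hasLineDerivAt_of_cauchyRiemann hpx hpy hqx hqy hpxqy hpyqx
  choose! d hx hy using hline
  exact looman_menchoff_general hU hcont (fun z hz ↦ (hx z hz).lineDifferentiableAt)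
    (fun z hz ↦ (hy z hz).lineDifferentiableAt)
    (.of_forall fun z hz ↦ by rw [(hx z hz).lineDeriv, (hy z hz).lineDeriv])
end
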